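/- Let U be a consistent c.e. theory that is effectively if-essentially incomplete, as witnessed by a partial computable function Φ, and let X and Y be disjoint c.e. subsets of ℕ. Then ⟨X, Y⟩ ≤_s ⟨U_p, U_r⟩, i.e. there is a total computable function f such that n ∈ X implies f(n) ∈ U_p and n ∈ Y implies f(n) ∈ U_r; moreover, an index of such an f can be obtained effectively from an index of Φ and indices of X and Y. -/

import Mathlib

/-!
Given `n`, the recursion theorem provides an index `i` of the theory `U`, to which `¬Φ(i)` is added
once `n` enters `X` and `Φ(i)` once `n` enters `Y`; put `f n = Φ(i)`. If `Φ(i)` diverged, nothing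
would be added, so `W i = U` would be consistent and `Φ(i)` would converge. If exactly one of the
two events happens, then `W i` is a finite extension of `U` that decides `Φ(i)`; hence it is
inconsistent, which means that `U` proves `Φ(i)` if `n ∈ X` and refutes it if `n ∈ Y`.
-/

open FirstOrder FirstOrder.Language

namespace PourEl

/-! ## Recursion-theoretic notions -/

/-- The `i`-th computably enumerable subset of `ℕ` (the domain of the `i`-th
partial computable function). -/
def WSet (i : ℕ) : Set ℕ :=
  {n | ((Denumerable.ofNat Nat.Partrec.Code i).eval n).Dom}

/-- A set of natural numbers is computably enumerable. -/
def CE (A : Set ℕ) : Prop := ∃ i, A = WSet i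

/-- A set of natural numbers is computable. -/
def Comp (A : Set ℕ) : Prop := ComputablePred (· ∈ A)

/-- Disjoint sets `X`, `Y` are computably separable iff some computable set
contains `X` and is disjoint from `Y`. -/
def CompSeparable (X Y : Set ℕ) : Prop :=
  ∃ Z : Set ℕ, Comp Z ∧ X ⊆ Z ∧ Y ∩ Z = ∅

/-- Computable inseparability. -/
def CompInseparable (X Y : Set ℕ) : Prop := ¬ CompSeparable X Y

/-- `Z` and `W` weakly biseparate `X` and `Y`. -/
def WeaklyBiseparate {α : Type*} (Z W X Y : Set α) : Prop :=
  X ⊆ Z ∧ Y ⊆ W ∧ Z ∩ Y = ∅ ∧ W ∩ X = ∅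

/-- `Z` and `W` biseparate `X` and `Y`. -/
def Biseparate {α : Type*} (Z W X Y : Set α) : Prop :=
  WeaklyBiseparate Z W X Y ∧ Z ∩ W = ∅

/-! ## Logical notions -/

variable {L : FirstOrder.Language}

/-- Provability: `φ` is a first-order consequence of `U` (by Gödel completeness,
semantic consequence). -/
def Prv (U : L.Theory) (φ : L.Sentence) : Prop := U ⊨ᵇ φ

/-- `U_p`: the set of theorems of `U`. -/
def Thms (U : L.Theory) : Set L.Sentence := {φ | Prv U φ}

/-- `U_r`: the set of refutable sentences of `U`. -/
def Refut (U : L.Theory) : Set L.Sentence := {φ | Prv U ∼φ}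

/-- Consistency: `U ⊬ ⊥`. -/
def Consistent (U : L.Theory) : Prop := ¬ Prv U ⊥

/-- `φ` is independent of `U`: `U` proves neither `φ` nor `¬φ`. -/
def Independent (U : L.Theory) (φ : L.Sentence) : Prop := ¬ Prv U φ ∧ ¬ Prv U ∼φ

/-- `U` is incomplete: some sentence is independent of it. -/
def Incomplete (U : L.Theory) : Prop := ∃ φ, Independent U φ

/-- Mono-consequence: `U ⊢_m φ` iff `ψ ⊢ φ` for some `ψ ∈ U`. -/
def MPrv (U : L.Theory) (φ : L.Sentence) : Prop := ∃ ψ ∈ U, Prv {ψ} φ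

/-- `U_m`: the set of mono-theorems of `U`. -/
def MThms (U : L.Theory) : Set L.Sentence := {φ | MPrv U φ}

/-- `U_n`: the set of mono-refutable sentences of `U`. -/
def MRefut (U : L.Theory) : Set L.Sentence := {φ | MPrv U ∼φ}

/-- Mono-consistency: every member is consistent by itself. -/
def MonoConsistent (U : L.Theory) : Prop := ∀ ψ ∈ U, Consistent ({ψ} : L.Theory)

/-- `Û`: the set of all non-empty finite conjunctions of elements of `U`. -/
def hat (U : L.Theory) : L.Theory :=
  {φ | ∃ (ψ : L.Sentence) (l : List L.Sentence),
    ψ ∈ U ∧ (∀ χ ∈ l, χ ∈ U) ∧ φ = l.foldl (· ⊓ ·) ψ}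

/-- `U ⋓ V`. -/
def Cup (U V : L.Theory) : L.Theory :=
  {χ | ∃ φ ∈ U, ∃ ψ ∈ V, χ = φ ⊓ ψ}

/-- `U ⋐ V`: for every `φ ∈ U` and `ψ ∈ V` there is `ρ ∈ V` with `ρ ⊢ φ ∧ ψ`. -/
def Ssub (U V : L.Theory) : Prop :=
  ∀ φ ∈ U, ∀ ψ ∈ V, ∃ ρ ∈ V, Prv {ρ} (φ ⊓ ψ)

/-! ## Gödel numbering -/

/-- A Gödel numbering of the sentences of a (countable) signature: a bijective
coding of sentences by natural numbers that is effective for the basic syntactic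
operations, and for which the theorems of a c.e. theory can be effectively
enumerated from an index of the theory. -/
structure Numbering (L : FirstOrder.Language) where
  equiv : L.Sentence ≃ ℕ
  neg_comp : Computable fun n => equiv ∼(equiv.symm n)
  inf_comp : Computable₂ fun m n => equiv (equiv.symm m ⊓ equiv.symm n)
  imp_comp : Computable₂ fun m n => equiv (equiv.symm m ⟹ equiv.symm n)
  iff_comp : Computable₂ fun m n => equiv (equiv.symm m ⇔ equiv.symm n)
  thmIdx : ℕ → ℕ
  thmIdx_comp : Computable thmIdx
  thmIdx_spec : ∀ i, WSet (thmIdx i) = equiv '' Thms (equiv.symm '' WSet i)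

namespace Numbering

variable (g : Numbering L)

/-- The code of a sentence. -/
def code (φ : L.Sentence) : ℕ := g.equiv φ

/-- The set of codes of a set of sentences. -/
def codes (S : Set L.Sentence) : Set ℕ := g.equiv '' S

/-- The theory axiomatised by the `i`-th c.e. set (identified with a set of
sentences via the numbering). -/
def thy (i : ℕ) : L.Theory := g.equiv.symm '' WSet i

/-- The theory `U` is computably enumerable (with respect to the numbering). -/
def CEThy (U : L.Theory) : Prop := CE (g.codes U)

end Numbering


/-- `Φ` witnesses that `U` is effectively if-essentially `F`-incomplete: whenever
`W i` is a consistent finite extension of `U` (as a set of axioms), `Φ i`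
converges to (the code of) a sentence in `F (W i)` independent of `W i`. -/
def IfEssWitness (g : Numbering L) (U : L.Theory)
    (F : Set L.Sentence → Set L.Sentence) (Φ : ℕ →. ℕ) : Prop :=
  ∀ i, (∃ Γ : Finset L.Sentence, g.thy i = U ∪ (Γ : Set L.Sentence)) →
    Consistent (g.thy i) →
    ∃ n ∈ Φ i, ∃ φ : L.Sentence, g.code φ = n ∧ φ ∈ F (g.thy i) ∧ Independent (g.thy i) φ

/-- `U` is effectively if-essentially `F`-incomplete. -/
def EffIfEssIncomplete (g : Numbering L) (U : L.Theory)
    (F : Set L.Sentence → Set L.Sentence) : Prop :=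
  ∃ Φ : ℕ →. ℕ, Partrec Φ ∧ IfEssWitness g U F Φ

section Enumerability

open Encodable
open Nat.Partrec (Code)

variable {α β : Type*} [Primcodable α] [Primcodable β]

theorem rePred_comp {p : β → Prop} (hp : REPred p) {f : α → β} (hf : Computable f) :
    REPred fun a => p (f a) :=
  Partrec.comp hp hf

theorem rePred_and {p q : α → Prop} (hp : REPred p) (hq : REPred q) :
    REPred fun a => p a ∧ q a :=
  (Partrec.bind hp (Partrec.comp hq Computable.fst).to₂).dom_re.of_eq fun a => by
    simp [Part.dom_iff_mem]

theorem rePred_or {p q : α → Prop} (hp : REPred p) (hq : REPred q) :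
    REPred fun a => p a ∨ q a := by
  obtain ⟨r, hr, hmem⟩ := Partrec.merge hp hq fun _ _ _ _ _ => rfl
  exact hr.dom_re.of_eq fun a => by simp [Part.dom_iff_mem, hmem]

theorem rePred_mem_of_partrec {f : α →. β} (hf : Partrec f) :
    REPred fun p : α × β => p.2 ∈ f p.1 := by
  classical
  have heq : REPred fun q : (α × β) × β => q.1.2 = q.2 :=
    (Primrec.eq.comp (Primrec.snd.comp Primrec.fst) Primrec.snd).computablePred.to_re
  exact ((hf.comp Computable.fst).bind heq.to₂).dom_re.of_eq fun p => by
    simp [Part.dom_iff_mem]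

theorem rePred_mem_wSet : REPred fun p : ℕ × ℕ => p.2 ∈ WSet p.1 :=
  (Code.eval_part.comp ((Computable.ofNat _).comp Computable.fst) Computable.snd).dom_re

theorem rePred_mem_of_ce {A : Set ℕ} (hA : CE A) : REPred (· ∈ A) := by
  obtain ⟨i, rfl⟩ := hA
  exact rePred_comp rePred_mem_wSet ((Computable.const i).pair Computable.id)

theorem exists_computable_eval_eq_self {f : ℕ × α → ℕ →. ℕ} (hf : Partrec₂ f) :
    ∃ I : α → ℕ, Computable I ∧ ∀ a, (Denumerable.ofNat Code (I a)).eval = f (I a, a) := by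
  let index (c : Code) (a : α) : ℕ := encode (c.curry (encode a))
  have hindex : Computable₂ index :=
    Computable.encode.comp <|
      Code.primrec₂_curry.to_comp.comp Computable.fst (Computable.encode.comp Computable.snd)
  -- A fixed point `c` of `body` runs `f` on its own curried index, for every parameter at once.
  let body (c : Code) (k : ℕ) : Part ℕ :=
    (decode (α := α) k.unpair.1 : Part α).bind fun a => f (index c a, a) k.unpair.2
  have hbody : Partrec₂ body := by
    have hk : Computable fun q : Code × ℕ => q.2.unpair :=
      Primrec.unpair.to_comp.comp Computable.snd
    have hk' : Computable fun q : (Code × ℕ) × α => q.1.2.unpair.2 :=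
      Computable.snd.comp (hk.comp Computable.fst)
    have hc : Computable fun q : (Code × ℕ) × α => q.1.1 := Computable.fst.comp Computable.fst
    exact (Computable.decode.comp (Computable.fst.comp hk)).ofOption.bind
      (hf.comp ((hindex.comp hc Computable.snd).pair Computable.snd) hk').to₂
  obtain ⟨c, hc⟩ := Code.fixed_point₂ hbody
  refine ⟨index c, hindex.comp (Computable.const c) Computable.id, fun a => funext fun n => ?_⟩
  simp [index, Code.eval_curry, hc, body]

theorem exists_computable_eval_eq {f : α → ℕ →. ℕ} (hf : Partrec₂ f) :
    ∃ I : α → ℕ, Computable I ∧ ∀ a, (Denumerable.ofNat Code (I a)).eval = f a :=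
  exists_computable_eval_eq_self (f := fun q => f q.2)
    (hf.comp (Computable.snd.comp Computable.fst) Computable.snd)

theorem exists_computable_wSet_eq_self {S : ℕ × α → Set ℕ}
    (hS : REPred fun q : (ℕ × α) × ℕ => q.2 ∈ S q.1) :
    ∃ I : α → ℕ, Computable I ∧ ∀ a, WSet (I a) = S (I a, a) := by
  let semidecide (q : ℕ × α) (n : ℕ) : Part ℕ :=
    (Part.assert (n ∈ S q) fun _ => Part.some ()).map fun _ => 0
  have hsemidecide : Partrec₂ semidecide := Partrec.map hS (Computable.const 0).to₂
  obtain ⟨I, hI, heval⟩ := exists_computable_eval_eq_self hsemidecide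
  exact ⟨I, hI, fun a => Set.ext fun n => by simp [WSet, heval, semidecide, Part.dom_iff_mem]⟩

end Enumerability

section Provability

variable {U : L.Theory} {φ : L.Sentence}

theorem consistent_iff_isSatisfiable : Consistent U ↔ U.IsSatisfiable := by
  simp [Consistent, Prv, Theory.models_sentence_iff, Theory.IsSatisfiable, Sentence.Realize]

theorem prv_iff_not_consistent : Prv U φ ↔ ¬Consistent (U ∪ {∼φ}) := by
  rw [consistent_iff_isSatisfiable]
  exact Theory.models_iff_not_satisfiable φ

theorem prv_not_of_not_consistent (h : ¬Consistent (U ∪ {φ})) : Prv U ∼φ := by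
  rw [consistent_iff_isSatisfiable] at h
  refine Theory.models_sentence_iff.2 fun M => (Sentence.realize_not M).2 fun hφ => h ?_
  have : M ⊨ U ∪ {φ} := Theory.model_union_iff.2 ⟨M.is_model, Theory.model_singleton_iff.2 hφ⟩
  exact Theory.Model.isSatisfiable M

end Provability

section DiagonalExtension

/-- The extension of `U` by the negation of the sentence `p` if the event `A` occurs, and by `p`
itself if `B` occurs. Here `p` is a possibly divergent computation of a sentence; while it diverges,
nothing is added. -/
def diagonalExtension (U : L.Theory) (p : Part L.Sentence) (A B : Prop) : L.Theory :=
  U ∪ {ψ | (A ∧ ψ ∈ p.map fun φ => ∼φ) ∨ (B ∧ ψ ∈ p)}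

variable {U : L.Theory} {φ : L.Sentence} {p : Part L.Sentence} {A B : Prop}

theorem diagonalExtension_none : diagonalExtension U Part.none A B = U := by
  simp [diagonalExtension]

theorem diagonalExtension_some_left (hA : A) (hB : ¬B) :
    diagonalExtension U (Part.some φ) A B = U ∪ {∼φ} := by
  simp [diagonalExtension, hA, hB]

theorem diagonalExtension_some_right (hA : ¬A) (hB : B) :
    diagonalExtension U (Part.some φ) A B = U ∪ {φ} := by
  simp [diagonalExtension, hA, hB]

theorem exists_finset_diagonalExtension_eq (U : L.Theory) (p : Part L.Sentence) (A B : Prop) :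
    ∃ Γ : Finset L.Sentence, diagonalExtension U p A B = U ∪ (Γ : Set L.Sentence) := by
  have hfin : {ψ | (A ∧ ψ ∈ p.map fun φ => ∼φ) ∨ (B ∧ ψ ∈ p)}.Finite := by
    obtain rfl | ⟨φ, rfl⟩ := p.eq_none_or_eq_some
    · simp
    · refine Set.Finite.subset (Set.toFinite {∼φ, φ}) ?_
      rintro ψ (⟨-, hψ⟩ | ⟨-, hψ⟩) <;> simp_all
  exact ⟨hfin.toFinset, by simp [diagonalExtension]⟩

theorem not_independent_diagonalExtension_some (hAB : A ∨ B) :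
    ¬Independent (diagonalExtension U (Part.some φ) A B) φ := by
  rintro ⟨hφ, hnφ⟩
  rcases hAB with hA | hB
  · exact hnφ (Theory.models_sentence_of_mem (by simp [diagonalExtension, hA]))
  · exact hφ (Theory.models_sentence_of_mem (by simp [diagonalExtension, hB]))

theorem exists_mem_prv_and_prv_not_of_independent (hcon : Consistent U)
    (hind : Consistent (diagonalExtension U p A B) →
      ∃ φ ∈ p, Independent (diagonalExtension U p A B) φ) :
    ∃ φ ∈ p, (A ∧ ¬B → Prv U φ) ∧ (B ∧ ¬A → Prv U ∼φ) := by
  obtain rfl | ⟨φ, rfl⟩ := p.eq_none_or_eq_some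
  · obtain ⟨φ, hφ, -⟩ := hind (diagonalExtension_none.symm ▸ hcon)
    exact absurd hφ (Part.notMem_none φ)
  have hincon (hAB : A ∨ B) : ¬Consistent (diagonalExtension U (Part.some φ) A B) := fun h => by
    obtain ⟨ψ, hψ, hindψ⟩ := hind h
    obtain rfl := Part.mem_some_iff.1 hψ
    exact not_independent_diagonalExtension_some hAB hindψ
  refine ⟨φ, Part.mem_some φ, fun ⟨hA, hB⟩ => ?_, fun ⟨hB, hA⟩ => ?_⟩
  · exact prv_iff_not_consistent.2 (diagonalExtension_some_left hA hB ▸ hincon (.inl hA))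
  · exact prv_not_of_not_consistent (diagonalExtension_some_right hA hB ▸ hincon (.inr hB))

end DiagonalExtension

section SemiReduction

open Nat.Partrec (Code)

variable {α : Type*} [Primcodable α] {g : Numbering L} {U : L.Theory}
  {F : Set L.Sentence → Set L.Sentence}

theorem exists_computable_thy_eq_self (g : Numbering L) {T : ℕ × α → L.Theory}
    (hT : REPred fun q : (ℕ × α) × ℕ => g.equiv.symm q.2 ∈ T q.1) :
    ∃ I : α → ℕ, Computable I ∧ ∀ a, g.thy (I a) = T (I a, a) := by
  obtain ⟨I, hI, hWSet⟩ := exists_computable_wSet_eq_self (S := fun q => g.equiv.symm ⁻¹' T q) hT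
  exact ⟨I, hI, fun a => by
    rw [Numbering.thy, hWSet, Set.image_preimage_eq _ g.equiv.symm.surjective]⟩

theorem rePred_mem_diagonalExtension (hU : g.CEThy U) {p : α →. ℕ} (hp : Partrec p)
    {A B : α → Prop} (hA : REPred A) (hB : REPred B) :
    REPred fun q : α × ℕ => g.equiv.symm q.2 ∈
      diagonalExtension U ((p q.1).map g.equiv.symm) (A q.1) (B q.1) := by
  have hneg : Partrec fun a => (p a).map fun m => g.equiv ∼(g.equiv.symm m) :=
    hp.map (g.neg_comp.comp Computable.snd).to₂
  refine (rePred_or (rePred_comp (rePred_mem_of_ce hU) Computable.snd)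
    (rePred_or (rePred_and (rePred_comp hA Computable.fst) (rePred_mem_of_partrec hneg))
      (rePred_and (rePred_comp hB Computable.fst) (rePred_mem_of_partrec hp)))).of_eq fun q => ?_
  simp [diagonalExtension, Numbering.codes, g.equiv.symm.exists_congr_left,
    ← Equiv.eq_symm_apply]

theorem exists_partrec_semiReduction (hU : g.CEThy U) (hcon : Consistent U)
    {Φ : α → ℕ →. ℕ} (hΦ : Partrec₂ Φ) {A B : α → Prop} (hA : REPred A) (hB : REPred B) :
    ∃ f : α →. ℕ, Partrec f ∧ ∀ a, IfEssWitness g U F (Φ a) →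
      ∃ m ∈ f a, (A a ∧ ¬B a → m ∈ g.codes (Thms U)) ∧
        (B a ∧ ¬A a → m ∈ g.codes (Refut U)) := by
  have hΦ' : Partrec fun q : ℕ × α => Φ q.2 q.1 := hΦ.comp Computable.snd Computable.fst
  obtain ⟨I, hI, hthy⟩ := exists_computable_thy_eq_self g
    (T := fun q => diagonalExtension U ((Φ q.2 q.1).map g.equiv.symm) (A q.2) (B q.2))
    (rePred_mem_diagonalExtension hU hΦ' (rePred_comp hA Computable.snd)
      (rePred_comp hB Computable.snd))
  refine ⟨fun a => Φ a (I a), hΦ.comp Computable.id hI, fun a hwit => ?_⟩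
  have hind (h : Consistent (g.thy (I a))) :
      ∃ φ ∈ (Φ a (I a)).map g.equiv.symm, Independent (g.thy (I a)) φ := by
    obtain ⟨m, hm, φ, rfl, -, hφ⟩ := hwit (I a) (hthy a ▸ exists_finset_diagonalExtension_eq ..) h
    exact ⟨φ, (Part.mem_map_iff _).2 ⟨_, hm, g.equiv.symm_apply_apply φ⟩, hφ⟩
  rw [hthy] at hind
  obtain ⟨φ, hφ, hprv, href⟩ := exists_mem_prv_and_prv_not_of_independent hcon hind
  obtain ⟨m, hm, rfl⟩ := (Part.mem_map_iff _).1 hφ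
  exact ⟨m, hm, fun h => ⟨_, hprv h, g.equiv.apply_symm_apply m⟩,
    fun h => ⟨_, href h, g.equiv.apply_symm_apply m⟩⟩

theorem exists_computable_semiReduction (hU : g.CEThy U) (hcon : Consistent U)
    {Φ : ℕ →. ℕ} (hΦ : Partrec Φ) (hwit : IfEssWitness g U F Φ)
    {X Y : Set ℕ} (hX : CE X) (hY : CE Y) :
    ∃ f : ℕ → ℕ, Computable f ∧ (∀ n ∈ X \ Y, f n ∈ g.codes (Thms U)) ∧
      (∀ n ∈ Y \ X, f n ∈ g.codes (Refut U)) := by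
  obtain ⟨f, hf, hmem⟩ := exists_partrec_semiReduction (F := F) hU hcon
    (Φ := fun _ : ℕ => Φ) (hΦ.comp Computable.snd) (rePred_mem_of_ce hX) (rePred_mem_of_ce hY)
  choose f' hf' hThms hRefut using fun n => hmem n hwit
  exact ⟨f', hf.of_eq_tot hf', hThms, hRefut⟩

theorem exists_computable_index_semiReduction (hU : g.CEThy U) (hcon : Consistent U) :
    ∃ I : ℕ × ℕ × ℕ → ℕ, Computable I ∧
      ∀ e a b, IfEssWitness g U F ((Denumerable.ofNat Code e).eval) →
        ∀ n, ∃ m ∈ (Denumerable.ofNat Code (I (e, a, b))).eval n,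
          (n ∈ WSet a \ WSet b → m ∈ g.codes (Thms U)) ∧
          (n ∈ WSet b \ WSet a → m ∈ g.codes (Refut U)) := by
  have he : Computable fun q : (ℕ × ℕ × ℕ) × ℕ => q.1.1 := Computable.fst.comp Computable.fst
  have hab : Computable fun q : (ℕ × ℕ × ℕ) × ℕ => q.1.2 := Computable.snd.comp Computable.fst
  obtain ⟨f, hf, hmem⟩ := exists_partrec_semiReduction (F := F) hU hcon
    (Φ := fun q : (ℕ × ℕ × ℕ) × ℕ => (Denumerable.ofNat Code q.1.1).eval)
    (Code.eval_part.comp ((Computable.ofNat _).comp (he.comp Computable.fst)) Computable.snd)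
    (rePred_comp rePred_mem_wSet ((Computable.fst.comp hab).pair Computable.snd))
    (rePred_comp rePred_mem_wSet ((Computable.snd.comp hab).pair Computable.snd))
  obtain ⟨I, hI, heval⟩ := exists_computable_eval_eq hf.to₂
  exact ⟨I, hI, fun e a b hwit n => heval (e, a, b) ▸ hmem ((e, a, b), n) hwit⟩

theorem statement19_general (hU : g.CEThy U) (hcon : Consistent U)
    {Φ : ℕ →. ℕ} (hΦ : Partrec Φ) (hwit : IfEssWitness g U F Φ)
    {X Y : Set ℕ} (hX : CE X) (hY : CE Y) :
    (∃ f : ℕ → ℕ, Computable f ∧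
        (∀ n ∈ X \ Y, f n ∈ g.codes (Thms U)) ∧
        (∀ n ∈ Y \ X, f n ∈ g.codes (Refut U))) ∧
      ∃ I : ℕ × ℕ × ℕ → ℕ, Computable I ∧
        ∀ e a b, IfEssWitness g U F ((Denumerable.ofNat Code e).eval) →
          ∀ n, ∃ m ∈ (Denumerable.ofNat Code (I (e, a, b))).eval n,
            (n ∈ WSet a \ WSet b → m ∈ g.codes (Thms U)) ∧
            (n ∈ WSet b \ WSet a → m ∈ g.codes (Refut U)) :=
  ⟨exists_computable_semiReduction hU hcon hΦ hwit hX hY,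
    exists_computable_index_semiReduction hU hcon⟩

end SemiReduction

/-- If the consistent c.e. theory `U` is effectively
if-essentially incomplete, as witnessed by the partial computable `Φ`, and `X`,
`Y` are disjoint c.e. sets, then `⟨X, Y⟩ ≤_s ⟨U_p, U_r⟩`: some total computable
`f` maps `X` into (codes of) `U_p` and `Y` into `U_r`. Moreover, an index of
such a semi-reduction can be obtained computably from an index of the witness
and indices of the two sets. -/
theorem statement19 {L : FirstOrder.Language} (g : Numbering L) (U : L.Theory)
    (hU : g.CEThy U) (hcon : Consistent U)
    (Φ : ℕ →. ℕ) (hΦ : Partrec Φ)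
    (hwit : IfEssWitness g U (fun _ => (Set.univ : Set L.Sentence)) Φ)
    (X Y : Set ℕ) (hX : CE X) (hY : CE Y) (hXY : Disjoint X Y) :
    (∃ f : ℕ → ℕ, Computable f ∧
        (∀ n ∈ X, f n ∈ g.codes (Thms U)) ∧
        (∀ n ∈ Y, f n ∈ g.codes (Refut U))) ∧
      ∃ F : ℕ × ℕ × ℕ → ℕ, Computable F ∧
        ∀ e a b,
          IfEssWitness g U (fun _ => (Set.univ : Set L.Sentence))
            ((Denumerable.ofNat Nat.Partrec.Code e).eval) →
          Disjoint (WSet a) (WSet b) →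
          ∀ n, ∃ m ∈ (Denumerable.ofNat Nat.Partrec.Code (F (e, a, b))).eval n,
            (n ∈ WSet a → m ∈ g.codes (Thms U)) ∧
            (n ∈ WSet b → m ∈ g.codes (Refut U)) := by
  obtain ⟨hf, F, hF, h⟩ := statement19_general hU hcon hΦ hwit hX hY
  rw [hXY.sdiff_eq_left, hXY.sdiff_eq_right] at hf
  exact ⟨hf, F, hF, fun e a b he hab => by
    simpa only [hab.sdiff_eq_left, hab.sdiff_eq_right] using h e a b he⟩

end PourEl
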